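/- Fix integers q ≥ 1 and γ with 0 ≤ γ ≤ q-1, a real u > 0, and for each integer d ≥ 2 a real K(d) < 0. If lim_{d→∞} (-K(d))·d = ∞, then lim_{d→∞} P(d,q,γ,K(d),u) = 0 (supercritical phase of the phase transition). -/

import Mathlib

open Real MeasureTheory Filter Asymptotics

/-- Surface area `ω_n = 2 π^{n/2} / Γ(n/2)` of the Euclidean unit sphere in `ℝ^n`. -/
noncomputable def omegaS (n : ℕ) : ℝ := 2 * Real.pi ^ ((n : ℝ) / 2) / Real.Gamma ((n : ℝ) / 2)

/-- The constant `D(d,q,γ)`. -/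
noncomputable def Dconst (d q γ : ℕ) : ℝ :=
  omegaS (γ + 1) * omegaS (q - γ) * omegaS (d - q) / (omegaS (d - q + γ + 1) * omegaS (d - γ))

/-- `R_K(x)`, the Euclidean (Beltrami–Klein) radius of a hyperbolic ball of radius `x`. -/
noncomputable def RK (K x : ℝ) : ℝ :=
  Real.sinh (Real.sqrt (-K) * x) /
    (Real.sqrt (-K) * Real.sqrt (1 + Real.sinh (Real.sqrt (-K) * x) ^ 2))

/-- `C_K(d,m,u)`, the invariant measure of the `m`-flats meeting the ball of radius `u`. -/
noncomputable def Cconst (K : ℝ) (d m : ℕ) (u : ℝ) : ℝ :=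
  omegaS (d - m) * Real.sqrt (-K) ^ (-(d : ℝ) + (m : ℝ) + 1) *
    ∫ r in (0:ℝ)..u,
      Real.cosh (Real.sqrt (-K) * r) ^ m * Real.sinh (Real.sqrt (-K) * r) ^ (d - m - 1)

/-- `P(d,q,γ,K,u)`, the hyperbolic intersection probability of the random flats `E` and `L`. -/
noncomputable def Pprob (d q γ : ℕ) (K u : ℝ) : ℝ :=
  Dconst d q γ * omegaS (d - γ) / Cconst K d (d - q + γ) u *
    ∫ r in (0:ℝ)..(1 / Real.sqrt (-K)),
      r ^ ((q : ℝ) - (γ : ℝ) - 1) *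
        ∫ z in (0:ℝ)..(min 1 (RK K u / r)),
          z ^ q * (1 - z ^ 2) ^ (((d : ℝ) - (q : ℝ)) / 2 - 1) *
            (1 + K * r ^ 2 * z ^ 2) ^ (-((d : ℝ) + 1) / 2)

/-- `F_{K,u}(δ)`, the distribution function of the distance of `E ∩ L` to the origin. -/
noncomputable def Fdist (d q γ : ℕ) (K u δ : ℝ) : ℝ :=
  Dconst d q γ * omegaS (d - γ) / Cconst K d (d - q + γ) u *
    ∫ r in (0:ℝ)..(RK K δ),
      r ^ ((q : ℝ) - (γ : ℝ) - 1) *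
        ∫ z in (0:ℝ)..(min 1 (RK K u / r)),
          z ^ q * (1 - z ^ 2) ^ (((d : ℝ) - (q : ℝ)) / 2 - 1) *
            (1 + K * r ^ 2 * z ^ 2) ^ (-((d : ℝ) + 1) / 2)

/-- `f_{d,q,γ,K}(δ)`, the density of the distance of `E ∩ L` to the origin. -/
noncomputable def fdens (d q γ : ℕ) (K u δ : ℝ) : ℝ :=
  Dconst d q γ * omegaS (d - γ) / Cconst K d (d - q + γ) u *
    (RK K δ ^ ((q : ℝ) - (γ : ℝ) - 1) / Real.cosh (Real.sqrt (-K) * δ) ^ 2) *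
    ∫ z in (0:ℝ)..(min 1 (RK K u / RK K δ)),
      z ^ q * (1 - z ^ 2) ^ (((d : ℝ) - (q : ℝ)) / 2 - 1) *
        (1 + K * RK K δ ^ 2 * z ^ 2) ^ (-((d : ℝ) + 1) / 2)

/-- The limiting constant `ρ(u,q,γ,κ)` in the critical phase. -/
noncomputable def rhoConst (u : ℝ) (q γ : ℕ) (κ : ℝ) : ℝ :=
  omegaS (γ + 1) * (2 * Real.pi) ^ (-((γ : ℝ) + 1) / 2) * u ^ (q + 1) *
    κ ^ (((γ : ℝ) + 1) / 2) *
    (∫ s in (0:ℝ)..u, Real.exp (κ * s ^ 2 / 2) * s ^ ((q : ℝ) - (γ : ℝ) - 1))⁻¹ *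
    ∫ r in (0:ℝ)..1,
      r ^ ((q : ℝ) - (γ : ℝ) - 1) *
        ∫ v in (0:ℝ)..(1 / r),
          v ^ q * Real.exp (-(1 / 2) * u ^ 2 * κ * v ^ 2 * (1 - r ^ 2))

/-! Substituting the Beltrami–Klein radius turns `C_K` into `ω_{q-γ} ∫_0^R U` with
`U(x) = x^{q-γ-1} (1 + K x²)^{-(d+1)/2}` and `R = R_K(u)`, while the numerator of `P` becomes
`∫∫ g(z) U(r z)` over `r ≤ 1/√(-K)`, `z ≤ 1`, `r z ≤ R`, with the Beta weight
`g(z) = z^{γ+1} (1 - z²)^{(d-q)/2-1}`. Since `U` is increasing on `[0, R]`, integrating first in `r`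
bounds this by `(1/√(-K)) / R · ∫ g · ∫_0^R U`: the density `U` cancels from `P`. Evaluating `∫ g`
gives `P ≤ (ω_{γ+1} / ω_{γ+2}) (ω_{m+2} / ω_{m+1}) / tanh(√(-K) u)` with `m = d - q + γ`, which is
`O(1/√d + 1/√(-K d))` because `ω_{m+2} / ω_{m+1} = O(1/√m)` and `1 / tanh a ≤ 1 + 1 / a`. -/

lemma integral_rpow_mul_one_sub_rpow {a b : ℝ} (ha : 0 < a) (hb : 0 < b) :
    ∫ t in (0:ℝ)..1, t ^ (a - 1) * (1 - t) ^ (b - 1) = ProbabilityTheory.beta a b := by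
  have hcast : Complex.betaIntegral a b =
      ((∫ t in (0:ℝ)..1, t ^ (a - 1) * (1 - t) ^ (b - 1) : ℝ) : ℂ) := by
    rw [Complex.betaIntegral, ← intervalIntegral.integral_ofReal]
    refine intervalIntegral.integral_congr fun t ht ↦ ?_
    rw [Set.uIcc_of_le zero_le_one] at ht
    push_cast [Complex.ofReal_cpow ht.1, Complex.ofReal_cpow (sub_nonneg.2 ht.2)]
    rfl
  rw [ProbabilityTheory.beta_eq_betaIntegralReal a b ha hb, hcast, Complex.ofReal_re]

lemma integral_mul_comp_sq_zero_one (g : ℝ → ℝ) :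
    ∫ z in (0:ℝ)..1, z * g (z ^ 2) = (∫ t in (0:ℝ)..1, g t) / 2 := by
  have hsubst := intervalIntegral.integral_comp_mul_deriv_of_deriv_nonneg (a := 0) (b := 1)
    (g := g) (continuousOn_pow 2) (fun z _ ↦ hasDerivAt_pow 2 z)
    (fun z hz ↦ by rw [min_eq_left zero_le_one] at hz; have := hz.1; positivity)
  rw [zero_pow two_ne_zero, one_pow] at hsubst
  rw [← hsubst, ← intervalIntegral.integral_div]
  congr 1 with z
  simp only [Function.comp_apply]
  ring

lemma integral_pow_mul_one_sub_sq_rpow (j : ℕ) {b : ℝ} (hb : 0 < b) :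
    ∫ z in (0:ℝ)..1, z ^ j * (1 - z ^ 2) ^ (b - 1) =
      ProbabilityTheory.beta (((j : ℝ) + 1) / 2) b / 2 := by
  rw [← integral_rpow_mul_one_sub_rpow (by positivity) hb, ← integral_mul_comp_sq_zero_one]
  refine intervalIntegral.integral_congr_Ioo_of_le zero_le_one fun z hz ↦ ?_
  have hpow : z * (z ^ 2) ^ (((j : ℝ) + 1) / 2 - 1) = z ^ j := by
    rw [← rpow_natCast z 2, ← rpow_mul hz.1.le, mul_comm, ← rpow_add_one hz.1.ne',
      ← rpow_natCast z j]
    congr 1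
    push_cast
    ring
  simp only [← hpow, mul_assoc]

lemma omegaS_pos {n : ℕ} (hn : n ≠ 0) : 0 < omegaS n := by
  unfold omegaS
  positivity

lemma omegaS_add_div_mul_omegaS {m n : ℕ} (hm : m ≠ 0) (hn : n ≠ 0) :
    omegaS (m + n) / (omegaS m * omegaS n) =
      ProbabilityTheory.beta ((n : ℝ) / 2) ((m : ℝ) / 2) / 2 := by
  simp only [omegaS, ProbabilityTheory.beta, Nat.cast_add, add_div, rpow_add pi_pos,
    add_comm ((n : ℝ) / 2)]
  field_simp

lemma integral_pow_mul_one_sub_sq_rpow_eq_omegaS (j : ℕ) {m : ℕ} (hm : m ≠ 0) :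
    ∫ z in (0:ℝ)..1, z ^ j * (1 - z ^ 2) ^ ((m : ℝ) / 2 - 1) =
      omegaS (m + (j + 1)) / (omegaS m * omegaS (j + 1)) := by
  rw [integral_pow_mul_one_sub_sq_rpow j (by positivity),
    omegaS_add_div_mul_omegaS hm j.succ_ne_zero, Nat.cast_succ]

lemma pow_mul_one_sub_sq_rpow_nonneg (j : ℕ) (s : ℝ) {z : ℝ} (hz : z ∈ Set.Icc 0 1) :
    0 ≤ z ^ j * (1 - z ^ 2) ^ s :=
  mul_nonneg (pow_nonneg hz.1 j)
    (rpow_nonneg (sub_nonneg.2 (pow_le_one₀ hz.1 hz.2)) s)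

lemma intervalIntegrable_pow_mul_one_sub_sq_rpow (j : ℕ) {m : ℕ} (hm : m ≠ 0) :
    IntervalIntegrable (fun z : ℝ ↦ z ^ j * (1 - z ^ 2) ^ ((m : ℝ) / 2 - 1)) volume 0 1 := by
  apply intervalIntegral.intervalIntegrable_of_integral_ne_zero
  rw [integral_pow_mul_one_sub_sq_rpow_eq_omegaS j hm]
  exact (div_pos (omegaS_pos (by lia))
    (mul_pos (omegaS_pos hm) (omegaS_pos j.succ_ne_zero))).ne'

lemma Gamma_add_half_le_sqrt_mul_Gamma {x : ℝ} (hx : 0 < x) :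
    Gamma (x + 1 / 2) ≤ √x * Gamma x :=
  calc
    Gamma (x + 1 / 2) = Gamma (1 / 2 * x + 1 / 2 * (x + 1)) := by ring_nf
    _ ≤ Gamma x ^ (1 / 2 : ℝ) * Gamma (x + 1) ^ (1 / 2 : ℝ) :=
      Gamma_mul_add_mul_le_rpow_Gamma_mul_rpow_Gamma hx (by linarith) (by norm_num) (by norm_num)
        (by norm_num)
    _ = √(Gamma x * (x * Gamma x)) := by
      rw [Gamma_add_one hx.ne', ← sqrt_eq_rpow, ← sqrt_eq_rpow,
        ← sqrt_mul (Gamma_nonneg_of_nonneg hx.le)]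
    _ = √x * Gamma x := by
      rw [mul_left_comm, sqrt_mul hx.le, sqrt_mul_self (Gamma_nonneg_of_nonneg hx.le)]

lemma omegaS_add_two_div_omegaS_add_one_le {m : ℕ} (hm : m ≠ 0) :
    omegaS (m + 2) / omegaS (m + 1) ≤ √(2 * π / m) := by
  have hx : 0 < (m : ℝ) / 2 := by positivity
  have hratio : omegaS (m + 2) / omegaS (m + 1) =
      √π * Gamma ((m : ℝ) / 2 + 1 / 2) / Gamma ((m : ℝ) / 2 + 1) := by
    have hsq : π ^ (1 / 2 : ℝ) * π ^ (1 / 2 : ℝ) = π := by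
      rw [← rpow_add pi_pos]; norm_num
    simp only [omegaS, Nat.cast_add, add_div, rpow_add pi_pos, sqrt_eq_rpow, Nat.cast_one,
      Nat.cast_ofNat, div_self (two_ne_zero (α := ℝ)), rpow_one]
    field_simp
    linear_combination -hsq
  calc
    omegaS (m + 2) / omegaS (m + 1)
        = √π * Gamma ((m : ℝ) / 2 + 1 / 2) / Gamma ((m : ℝ) / 2 + 1) := hratio
    _ ≤ √π * (√((m : ℝ) / 2) * Gamma ((m : ℝ) / 2)) / ((m : ℝ) / 2 * Gamma ((m : ℝ) / 2)) := by
      rw [Gamma_add_one hx.ne']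
      gcongr
      exact Gamma_add_half_le_sqrt_mul_Gamma hx
    _ = √π * (√((m : ℝ) / 2) / ((m : ℝ) / 2)) := by field_simp
    _ = √(2 * π / m) := by
      rw [sqrt_div_self', one_div, ← sqrt_inv, ← sqrt_mul pi_pos.le]
      congr 1
      field_simp

lemma inv_tanh_le_one_add_inv {a : ℝ} (ha : 0 < a) : (tanh a)⁻¹ ≤ 1 + a⁻¹ := by
  calc
    (tanh a)⁻¹ = 1 + exp (-a) / sinh a := by
      rw [tanh_eq_sinh_div_cosh, inv_div, ← cosh_sub_sinh]
      field_simp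
      ring
    _ ≤ 1 + 1 / a := by
      gcongr
      · exact exp_le_one_iff.2 (neg_nonpos.2 ha.le)
      · exact self_le_sinh_iff.2 ha.le
    _ = 1 + a⁻¹ := by rw [one_div]

lemma RK_eq_tanh_div (K x : ℝ) : RK K x = tanh (√(-K) * x) / √(-K) := by
  rw [RK, add_comm 1, ← cosh_sq, sqrt_sq (cosh_pos _).le, tanh_eq_sinh_div_cosh, div_div,
    mul_comm √(-K) (cosh _)]

lemma RK_zero (K : ℝ) : RK K 0 = 0 := by
  rw [RK_eq_tanh_div, mul_zero, tanh_zero, zero_div]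

lemma RK_pos {K x : ℝ} (hK : K < 0) (hx : 0 < x) : 0 < RK K x := by
  have hk : 0 < √(-K) := sqrt_pos.2 (neg_pos.2 hK)
  unfold RK
  positivity

lemma one_add_mul_RK_sq {K : ℝ} (hK : K < 0) (x : ℝ) :
    1 + K * RK K x ^ 2 = (cosh (√(-K) * x) ^ 2)⁻¹ := by
  have hk : √(-K) ^ 2 = -K := sq_sqrt (neg_pos.2 hK).le
  rw [RK_eq_tanh_div, tanh_eq_sinh_div_cosh, div_pow, hk]
  field_simp [hK.ne]
  linear_combination cosh_sq (√(-K) * x)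

lemma one_add_mul_RK_sq_pos {K : ℝ} (hK : K < 0) (x : ℝ) : 0 < 1 + K * RK K x ^ 2 := by
  rw [one_add_mul_RK_sq hK]
  exact inv_pos.2 (pow_pos (cosh_pos _) 2)

lemma hasDerivAt_RK {K : ℝ} (hK : K < 0) (x : ℝ) :
    HasDerivAt (RK K) (cosh (√(-K) * x) ^ 2)⁻¹ x := by
  have hk : 0 < √(-K) := sqrt_pos.2 (neg_pos.2 hK)
  have hcosh := cosh_pos (√(-K) * x)
  have hlin : HasDerivAt (fun y ↦ √(-K) * y) √(-K) x := hasDerivAt_const_mul √(-K)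
  have hRK : RK K = fun y ↦ sinh (√(-K) * y) / cosh (√(-K) * y) / √(-K) := by
    ext y
    rw [RK_eq_tanh_div, tanh_eq_sinh_div_cosh]
  rw [hRK]
  refine ((hlin.sinh.div hlin.cosh hcosh.ne').div_const √(-K)).congr_deriv ?_
  field_simp
  linear_combination cosh_sq (√(-K) * x)

/-- The density, in the Beltrami–Klein radius `x` and up to the factor `ω_{n+1}`, of the invariant
measure of the flats of codimension `n + 1` in `d`-dimensional hyperbolic space of curvature `K`. -/
noncomputable def kleinDensity (n d : ℕ) (K x : ℝ) : ℝ :=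
  x ^ n * (1 + K * x ^ 2) ^ (-((d : ℝ) + 1) / 2)

lemma kleinDensity_nonneg (n d : ℕ) {K R x : ℝ} (hK : K ≤ 0) (hR : 0 ≤ 1 + K * R ^ 2)
    (hx : x ∈ Set.Icc 0 R) : 0 ≤ kleinDensity n d K x := by
  have hsq : K * R ^ 2 ≤ K * x ^ 2 :=
    mul_le_mul_of_nonpos_left (pow_le_pow_left₀ hx.1 hx.2 2) hK
  exact mul_nonneg (pow_nonneg hx.1 n) (rpow_nonneg (by linarith) _)

lemma monotoneOn_kleinDensity (n d : ℕ) {K R : ℝ} (hK : K ≤ 0) (hR : 0 < 1 + K * R ^ 2) :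
    MonotoneOn (kleinDensity n d K) (Set.Icc 0 R) := by
  intro x hx y hy hxy
  have hxy_sq : K * y ^ 2 ≤ K * x ^ 2 :=
    mul_le_mul_of_nonpos_left (pow_le_pow_left₀ hx.1 hxy 2) hK
  have hyR_sq : K * R ^ 2 ≤ K * y ^ 2 :=
    mul_le_mul_of_nonpos_left (pow_le_pow_left₀ hy.1 hy.2 2) hK
  have hexp : -((d : ℝ) + 1) / 2 ≤ 0 := by linarith [d.cast_nonneg (α := ℝ)]
  exact mul_le_mul (pow_le_pow_left₀ hx.1 hxy n)
    (rpow_le_rpow_of_nonpos (by linarith) (by linarith) hexp) (rpow_nonneg (by linarith) _)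
    (pow_nonneg hy.1 n)

lemma kleinDensity_RK_mul_inv_cosh_sq {n d : ℕ} (hn : n < d) {K : ℝ} (hK : K < 0) (x : ℝ) :
    kleinDensity n d K (RK K x) * (cosh (√(-K) * x) ^ 2)⁻¹ =
      √(-K) ^ (-(n : ℝ)) * (cosh (√(-K) * x) ^ (d - n - 1) * sinh (√(-K) * x) ^ n) := by
  have hk : 0 < √(-K) := sqrt_pos.2 (neg_pos.2 hK)
  have hcosh := cosh_pos (√(-K) * x)
  have hpow : ((cosh (√(-K) * x) ^ 2)⁻¹) ^ (-((d : ℝ) + 1) / 2) = cosh (√(-K) * x) ^ (d + 1) := by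
    rw [inv_rpow (by positivity), ← rpow_neg (by positivity), ← rpow_natCast, ← rpow_mul hcosh.le,
      ← rpow_natCast]
    congr 1
    push_cast
    ring
  obtain ⟨m, rfl⟩ := Nat.exists_eq_add_of_lt hn
  rw [kleinDensity, one_add_mul_RK_sq hK, hpow, RK_eq_tanh_div, tanh_eq_sinh_div_cosh,
    rpow_neg hk.le, rpow_natCast, show n + m + 1 - n - 1 = m by lia, div_pow, div_pow]
  field_simp
  ring

lemma Cconst_eq_integral_kleinDensity {d m : ℕ} (hm : m < d) {K : ℝ} (hK : K < 0) (u : ℝ) :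
    Cconst K d m u =
      omegaS (d - m) * ∫ x in (0:ℝ)..RK K u, kleinDensity (d - m - 1) d K x := by
  have hsubst := intervalIntegral.integral_comp_mul_deriv_of_deriv_nonneg (a := 0) (b := u)
    (g := kleinDensity (d - m - 1) d K)
    (fun x _ ↦ (hasDerivAt_RK hK x).continuousAt.continuousWithinAt)
    (fun x _ ↦ hasDerivAt_RK hK x) (fun x _ ↦ by positivity)
  rw [RK_zero] at hsubst
  have hexp : -(d : ℝ) + m + 1 = -((d - m - 1 : ℕ) : ℝ) := by
    rw [Nat.cast_sub (by lia), Nat.cast_sub hm.le]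
    push_cast
    ring
  have hcodim : d - (d - m - 1) - 1 = m := by lia
  simp only [← hsubst, Function.comp_apply,
    kleinDensity_RK_mul_inv_cosh_sq (by lia : d - m - 1 < d) hK,
    intervalIntegral.integral_const_mul, hcodim, Cconst, hexp, mul_assoc]

section HyperbolicRegion

variable {E : Type*} [NormedAddCommGroup E] [NormedSpace ℝ E] {a b R : ℝ}

lemma integral_zero_min_div (ha : 0 ≤ a) (hR : 0 ≤ R) {r : ℝ} (hr : 0 < r) (f : ℝ → E) :
    ∫ z in (0:ℝ)..min a (R / r), f z = ∫ z in (0:ℝ)..a, {z | r * z ≤ R}.indicator f z := by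
  rw [← intervalIntegral.integral_indicator
    (show min a (R / r) ∈ Set.Icc 0 a from ⟨le_min ha (by positivity), min_le_left _ _⟩)]
  refine intervalIntegral.integral_congr_Ioo_of_le ha fun z hz ↦ ?_
  have hmem : z ≤ min a (R / r) ↔ r * z ≤ R := by
    rw [le_min_iff, le_div_iff₀' hr, and_iff_right hz.2.le]
  simp only [Set.indicator, Set.mem_ofPred_eq, hmem]

lemma integral_integral_zero_min_div_swap (ha : 0 ≤ a) (hb : 0 ≤ b) (hR : 0 ≤ R)
    {f : ℝ → ℝ → E} (hf : IntegrableOn f.uncurry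
      ({p | p.1 * p.2 ≤ R} ∩ Set.Ioc 0 b ×ˢ Set.Ioc 0 a)) :
    ∫ r in (0:ℝ)..b, ∫ z in (0:ℝ)..min a (R / r), f r z =
      ∫ z in (0:ℝ)..a, ∫ r in (0:ℝ)..min b (R / z), f r z := by
  have hmeas : MeasurableSet {p : ℝ × ℝ | p.1 * p.2 ≤ R} :=
    measurableSet_le (by fun_prop) measurable_const
  have hleft : ∫ r in (0:ℝ)..b, ∫ z in (0:ℝ)..min a (R / r), f r z =
      ∫ r in (0:ℝ)..b, ∫ z in (0:ℝ)..a, {z | r * z ≤ R}.indicator (f r) z :=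
    intervalIntegral.integral_congr_Ioo_of_le hb fun r hr ↦ integral_zero_min_div ha hR hr.1 (f r)
  have hright : ∫ z in (0:ℝ)..a, ∫ r in (0:ℝ)..min b (R / z), f r z =
      ∫ z in (0:ℝ)..a, ∫ r in (0:ℝ)..b, {r | z * r ≤ R}.indicator (f · z) r :=
    intervalIntegral.integral_congr_Ioo_of_le ha fun z hz ↦
      integral_zero_min_div hb hR hz.1 (f · z)
  rw [hleft, hright, intervalIntegral_intervalIntegral_swap]
  · simp only [Set.indicator, Set.mem_ofPred_eq, mul_comm]
  · rw [Set.uIoc_of_le hb, Set.uIoc_of_le ha]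
    have hcut : (Function.uncurry fun r ↦ {z | r * z ≤ R}.indicator (f r)) =
        {p : ℝ × ℝ | p.1 * p.2 ≤ R}.indicator f.uncurry := rfl
    rwa [hcut, integrableOn_indicator_iff hmeas]

end HyperbolicRegion

section MonotoneWeight

variable {R : ℝ} {g U : ℝ → ℝ}

lemma integral_comp_mul_right_le_of_monotoneOn (hU : MonotoneOn U (Set.Icc 0 R)) (hR : 0 < R)
    {c z : ℝ} (hc : 0 ≤ c) (hz : 0 ≤ z) (hcz : c * z ≤ R) :
    ∫ r in (0:ℝ)..c, U (r * z) ≤ c / R * ∫ x in (0:ℝ)..R, U x := by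
  have hcR : 0 ≤ c / R := by positivity
  have hscale : c / R * z ≤ 1 := by rwa [div_mul_eq_mul_div, div_le_one hR]
  have hmem : ∀ x ∈ Set.Icc 0 R, c / R * x * z ∈ Set.Icc 0 x := fun x hx ↦
    ⟨mul_nonneg (mul_nonneg hcR hx.1) hz,
      by simpa only [mul_right_comm, one_mul] using mul_le_mul_of_nonneg_right hscale hx.1⟩
  have hscaled : MonotoneOn (fun x ↦ U (c / R * x * z)) (Set.Icc 0 R) := fun x hx y hy hxy ↦
    hU (Set.Icc_subset_Icc_right hx.2 (hmem x hx)) (Set.Icc_subset_Icc_right hy.2 (hmem y hy))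
      (by gcongr)
  calc
    ∫ r in (0:ℝ)..c, U (r * z) = c / R * ∫ x in (0:ℝ)..R, U (c / R * x * z) := by
      rw [intervalIntegral.mul_integral_comp_mul_left (f := fun r ↦ U (r * z)), mul_zero,
        div_mul_cancel₀ c hR.ne']
    _ ≤ c / R * ∫ x in (0:ℝ)..R, U x := by
      gcongr
      rw [← Set.uIcc_of_le hR.le] at hU hscaled
      refine intervalIntegral.integral_mono_on hR.le hscaled.intervalIntegrable
        hU.intervalIntegrable fun x hx ↦ ?_
      rw [Set.uIcc_of_le hR.le] at hU
      exact hU (Set.Icc_subset_Icc_right hx.2 (hmem x hx)) hx (hmem x hx).2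

lemma integrableOn_mul_comp_mul_of_monotoneOn (hU : MonotoneOn U (Set.Icc 0 R)) (hR : 0 ≤ R)
    {a b : ℝ} (hg : IntegrableOn g (Set.Ioc 0 a)) :
    IntegrableOn (Function.uncurry fun r z ↦ g z * U (r * z))
      ({p | p.1 * p.2 ≤ R} ∩ Set.Ioc 0 b ×ˢ Set.Ioc 0 a) := by
  have hmeas : MeasurableSet ({p : ℝ × ℝ | p.1 * p.2 ≤ R} ∩ Set.Ioc 0 b ×ˢ Set.Ioc 0 a) :=
    (measurableSet_le (by fun_prop) measurable_const).inter
      (measurableSet_Ioc.prod measurableSet_Ioc)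
  -- Monotonicity makes the extension of `U` from `[0, R]` by constants measurable and bounded.
  let V : ℝ → ℝ := Set.IccExtend hR ((Set.Icc 0 R).domRestrict U)
  have hV : Measurable V := (Monotone.IccExtend (h := hR) hU.monotone).measurable
  have hV_bound : ∀ x, ‖V x‖ ≤ max |U 0| |U R| := by
    intro x
    obtain ⟨y, hy⟩ : ∃ y : Set.Icc 0 R, V x = U y := ⟨Set.projIcc 0 R hR x, rfl⟩
    rw [hy]
    exact abs_le_max_abs_abs (hU (Set.left_mem_Icc.2 hR) y.2 y.2.1)
      (hU y.2 (Set.right_mem_Icc.2 hR) y.2.2)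
  have hg_prod : IntegrableOn (fun p : ℝ × ℝ ↦ g p.2) (Set.Ioc 0 b ×ˢ Set.Ioc 0 a) := by
    rw [IntegrableOn, Measure.volume_eq_prod, ← Measure.prod_restrict]
    exact hg.comp_snd _
  have hint : IntegrableOn (fun p : ℝ × ℝ ↦ g p.2 * V (p.1 * p.2)) _ :=
    (hg_prod.mono_set (s := {p | p.1 * p.2 ≤ R} ∩ _) Set.inter_subset_right).mul_bdd
      (hV.comp (measurable_fst.mul measurable_snd)).aestronglyMeasurable
      (ae_of_all _ fun p ↦ hV_bound _)
  refine hint.congr_fun (fun p hp ↦ ?_) hmeas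
  have hmem : p.1 * p.2 ∈ Set.Icc 0 R := ⟨(mul_pos hp.2.1.1 hp.2.2.1).le, hp.1⟩
  simp only [Function.uncurry, V, Set.IccExtend_of_mem hR _ hmem, Set.domRestrict_apply]

lemma integral_integral_mul_comp_mul_nonneg (hU₀ : ∀ x ∈ Set.Icc 0 R, 0 ≤ U x) (hR : 0 ≤ R)
    {a b : ℝ} (ha : 0 ≤ a) (hb : 0 ≤ b) (hg₀ : ∀ z ∈ Set.Icc 0 a, 0 ≤ g z) :
    0 ≤ ∫ r in (0:ℝ)..b, ∫ z in (0:ℝ)..min a (R / r), g z * U (r * z) := by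
  refine intervalIntegral.integral_nonneg hb fun r hr ↦ ?_
  refine intervalIntegral.integral_nonneg (le_min ha (div_nonneg hR hr.1)) fun z hz ↦ ?_
  have hrz : r * z ≤ R := by
    rw [mul_comm]
    exact mul_le_of_le_div₀ hR hr.1 (hz.2.trans (min_le_right _ _))
  exact mul_nonneg (hg₀ z ⟨hz.1, hz.2.trans (min_le_left _ _)⟩)
    (hU₀ _ ⟨mul_nonneg hr.1 hz.1, hrz⟩)

lemma integral_integral_mul_comp_mul_le (hU : MonotoneOn U (Set.Icc 0 R))
    (hU₀ : ∀ x ∈ Set.Icc 0 R, 0 ≤ U x) (hR : 0 < R) {a b : ℝ} (ha : 0 ≤ a) (hb : 0 ≤ b)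
    (hg : IntervalIntegrable g volume 0 a) (hg₀ : ∀ z ∈ Set.Icc 0 a, 0 ≤ g z) :
    ∫ r in (0:ℝ)..b, ∫ z in (0:ℝ)..min a (R / r), g z * U (r * z) ≤
      b / R * (∫ z in (0:ℝ)..a, g z) * ∫ x in (0:ℝ)..R, U x := by
  have hUR : 0 ≤ ∫ x in (0:ℝ)..R, U x := intervalIntegral.integral_nonneg hR.le hU₀
  have hmin : ∀ z ∈ Set.Ioc 0 a, 0 ≤ min b (R / z) := fun z hz ↦
    le_min hb (div_nonneg hR.le hz.1.le)
  have hinner_nonneg : ∀ z ∈ Set.Ioc 0 a, 0 ≤ ∫ r in (0:ℝ)..min b (R / z), U (r * z) :=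
    fun z hz ↦ intervalIntegral.integral_nonneg (hmin z hz) fun r hr ↦
      hU₀ _ ⟨mul_nonneg hr.1 hz.1.le, (le_div_iff₀ hz.1).1 (hr.2.trans (min_le_right _ _))⟩
  have hinner_le : ∀ z ∈ Set.Ioc 0 a, ∫ r in (0:ℝ)..min b (R / z), U (r * z) ≤
      b / R * ∫ x in (0:ℝ)..R, U x := by
    intro z hz
    refine (integral_comp_mul_right_le_of_monotoneOn hU hR (hmin z hz) hz.1.le
      ((le_div_iff₀ hz.1).1 (min_le_right _ _))).trans ?_
    gcongr
    exact min_le_left _ _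
  rw [integral_integral_zero_min_div_swap ha hb hR.le
    (integrableOn_mul_comp_mul_of_monotoneOn hU hR.le hg.1), mul_right_comm, mul_comm,
    ← intervalIntegral.integral_mul_const]
  simp only [intervalIntegral.integral_const_mul, intervalIntegral.integral_of_le ha]
  refine integral_mono_of_nonneg ?_ (hg.1.mul_const _) ?_ <;>
    refine (ae_restrict_iff' measurableSet_Ioc).2 (ae_of_all _ fun z hz ↦ ?_)
  · exact mul_nonneg (hg₀ z (Set.Ioc_subset_Icc_self hz)) (hinner_nonneg z hz)
  · exact mul_le_mul_of_nonneg_left (hinner_le z hz) (hg₀ z (Set.Ioc_subset_Icc_self hz))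

end MonotoneWeight

section IntersectionProbability

variable {d q γ : ℕ} {K u : ℝ}

lemma Pprob_eq_mul_integral_div_integral (hγ : γ < q) (hq : q < d) (hK : K < 0) (u : ℝ) :
    Pprob d q γ K u = omegaS (γ + 1) * (omegaS (d - q) / omegaS (d - q + γ + 1)) *
      ((∫ r in (0:ℝ)..1 / √(-K), ∫ z in (0:ℝ)..min 1 (RK K u / r),
        z ^ (γ + 1) * (1 - z ^ 2) ^ (((d - q : ℕ) : ℝ) / 2 - 1) *
          kleinDensity (q - γ - 1) d K (r * z)) /
        ∫ x in (0:ℝ)..RK K u, kleinDensity (q - γ - 1) d K x) := by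
  have hcodim : d - (d - q + γ) = q - γ := by lia
  have hω : omegaS (q - γ) ≠ 0 := (omegaS_pos (by lia)).ne'
  have hω' : omegaS (d - γ) ≠ 0 := (omegaS_pos (by lia)).ne'
  have hexp : (q : ℝ) - γ - 1 = ((q - γ - 1 : ℕ) : ℝ) := by
    rw [Nat.cast_sub (by lia), Nat.cast_sub hγ.le, Nat.cast_one]
  have hinner : ∀ r c : ℝ, r ^ ((q : ℝ) - γ - 1) * (∫ z in (0:ℝ)..c,
        z ^ q * (1 - z ^ 2) ^ (((d : ℝ) - q) / 2 - 1) *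
          (1 + K * r ^ 2 * z ^ 2) ^ (-((d : ℝ) + 1) / 2)) =
      ∫ z in (0:ℝ)..c, z ^ (γ + 1) * (1 - z ^ 2) ^ (((d - q : ℕ) : ℝ) / 2 - 1) *
        kleinDensity (q - γ - 1) d K (r * z) := by
    intro r c
    rw [← intervalIntegral.integral_const_mul]
    congr 1 with z
    have hz : z ^ q = z ^ (γ + 1) * z ^ (q - γ - 1) := by rw [← pow_add]; congr 1; lia
    rw [hexp, rpow_natCast, hz, kleinDensity, mul_pow, mul_pow, Nat.cast_sub hq.le, ← mul_assoc K]
    ring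
  rw [Pprob, Dconst, Cconst_eq_integral_kleinDensity (by lia : d - q + γ < d) hK, hcodim]
  simp only [hinner]
  field_simp

lemma Pprob_nonneg (hγ : γ < q) (hq : q < d) (hK : K < 0) (hu : 0 < u) : 0 ≤ Pprob d q γ K u := by
  have hR : 0 ≤ RK K u := (RK_pos hK hu).le
  have hU : ∀ x ∈ Set.Icc 0 (RK K u), 0 ≤ kleinDensity (q - γ - 1) d K x := fun x hx ↦
    kleinDensity_nonneg _ _ hK.le (one_add_mul_RK_sq_pos hK u).le hx
  have hω₁ : 0 < omegaS (γ + 1) := omegaS_pos (by lia)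
  have hω₂ : 0 < omegaS (d - q) := omegaS_pos (by lia)
  have hω₃ : 0 < omegaS (d - q + γ + 1) := omegaS_pos (by lia)
  rw [Pprob_eq_mul_integral_div_integral hγ hq hK]
  exact mul_nonneg (by positivity) <| div_nonneg
    (integral_integral_mul_comp_mul_nonneg hU hR zero_le_one (by positivity) fun _ ↦
      pow_mul_one_sub_sq_rpow_nonneg _ _)
    (intervalIntegral.integral_nonneg hR hU)

lemma Pprob_le_omegaS_div_mul_inv_tanh (hγ : γ < q) (hq : q < d) (hK : K < 0) (hu : 0 < u) :
    Pprob d q γ K u ≤ omegaS (γ + 1) / omegaS (γ + 2) *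
      (omegaS (d - q + γ + 2) / omegaS (d - q + γ + 1)) * (tanh (√(-K) * u))⁻¹ := by
  have hk : √(-K) ≠ 0 := (sqrt_pos.2 (neg_pos.2 hK)).ne'
  have hR : 0 < RK K u := RK_pos hK hu
  have hKR : 0 < 1 + K * RK K u ^ 2 := one_add_mul_RK_sq_pos hK u
  have hU : ∀ x ∈ Set.Icc 0 (RK K u), 0 ≤ kleinDensity (q - γ - 1) d K x := fun x hx ↦
    kleinDensity_nonneg _ _ hK.le hKR.le hx
  have hω₁ : 0 < omegaS (γ + 1) := omegaS_pos (by lia)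
  have hω₂ : 0 < omegaS (d - q) := omegaS_pos (by lia)
  have hω₃ : 0 < omegaS (d - q + γ + 1) := omegaS_pos (by lia)
  rw [Pprob_eq_mul_integral_div_integral hγ hq hK]
  calc
    _ ≤ omegaS (γ + 1) * (omegaS (d - q) / omegaS (d - q + γ + 1)) *
        (1 / √(-K) / RK K u *
          ∫ z in (0:ℝ)..1, z ^ (γ + 1) * (1 - z ^ 2) ^ (((d - q : ℕ) : ℝ) / 2 - 1)) := by
      gcongr
      refine div_le_of_le_mul₀ (intervalIntegral.integral_nonneg hR.le hU) ?_
        (integral_integral_mul_comp_mul_le (monotoneOn_kleinDensity _ d hK.le hKR) hU hR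
          zero_le_one (by positivity) (intervalIntegrable_pow_mul_one_sub_sq_rpow _ (by lia))
          fun _ ↦ pow_mul_one_sub_sq_rpow_nonneg _ _)
      exact mul_nonneg (by positivity) <| intervalIntegral.integral_nonneg zero_le_one fun _ ↦
        pow_mul_one_sub_sq_rpow_nonneg _ _
    _ = _ := by
      rw [integral_pow_mul_one_sub_sq_rpow_eq_omegaS _ (by lia), RK_eq_tanh_div,
        div_div_div_cancel_right₀ hk, one_div,
        show d - q + (γ + 1 + 1) = d - q + γ + 2 by lia]
      field_simp

lemma Pprob_le_mul_inv_sqrt_add_inv_sqrt (hγ : γ < q) (hq : 2 * q ≤ d) (hK : K < 0) (hu : 0 < u) :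
    Pprob d q γ K u ≤ omegaS (γ + 1) / omegaS (γ + 2) * √(4 * π) *
      ((√d)⁻¹ + (√(-K * d))⁻¹ * u⁻¹) := by
  have hd : (0 : ℝ) < d := by exact_mod_cast (by lia : 0 < d)
  have hk : 0 < √(-K) := sqrt_pos.2 (neg_pos.2 hK)
  have hω : 0 < omegaS (γ + 1) := omegaS_pos (by lia)
  have hω' : 0 < omegaS (γ + 2) := omegaS_pos (by lia)
  have hratio : omegaS (d - q + γ + 2) / omegaS (d - q + γ + 1) ≤ √(4 * π / d) := by
    refine (omegaS_add_two_div_omegaS_add_one_le (by lia)).trans (sqrt_le_sqrt ?_)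
    have hm : (d : ℝ) ≤ 2 * (d - q + γ : ℕ) := by exact_mod_cast (by lia : d ≤ 2 * (d - q + γ))
    calc
      2 * π / (d - q + γ : ℕ) = 4 * π / (2 * (d - q + γ : ℕ)) := by
        rw [← mul_div_mul_left _ _ (two_ne_zero (α := ℝ)), ← mul_assoc]
        norm_num
      _ ≤ 4 * π / d := by gcongr
  have htanh : 0 < tanh (√(-K) * u) := by
    rw [tanh_eq_sinh_div_cosh]
    exact div_pos (sinh_pos_iff.2 (by positivity)) (cosh_pos _)
  calc
    Pprob d q γ K u ≤ omegaS (γ + 1) / omegaS (γ + 2) *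
        (omegaS (d - q + γ + 2) / omegaS (d - q + γ + 1)) * (tanh (√(-K) * u))⁻¹ :=
      Pprob_le_omegaS_div_mul_inv_tanh hγ (by lia) hK hu
    _ ≤ omegaS (γ + 1) / omegaS (γ + 2) * √(4 * π / d) * (1 + (√(-K) * u)⁻¹) := by
      gcongr
      exact inv_tanh_le_one_add_inv (by positivity)
    _ = omegaS (γ + 1) / omegaS (γ + 2) * √(4 * π) * ((√d)⁻¹ + (√(-K * d))⁻¹ * u⁻¹) := by
      rw [sqrt_div' _ hd.le, sqrt_mul (neg_pos.2 hK).le]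
      field_simp

end IntersectionProbability

/-- supercritical phase, `-K(d)·d → ∞` implies the intersection probability tends to 0. -/
theorem phase_transition_supercritical (q γ : ℕ) (hq : 1 ≤ q) (hγ : γ ≤ q - 1) (u : ℝ)
    (hu : 0 < u) (K : ℕ → ℝ) (hK : ∀ d : ℕ, 2 ≤ d → K d < 0)
    (h : Tendsto (fun d : ℕ => -K d * (d : ℝ)) atTop atTop) :
    Tendsto (fun d : ℕ => Pprob d q γ (K d) u) atTop (nhds 0) := by
  have hγq : γ < q := by lia
  have hd : Tendsto (fun d : ℕ ↦ (√(d : ℝ))⁻¹) atTop (nhds 0) :=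
    tendsto_inv_atTop_zero.comp (tendsto_sqrt_atTop.comp tendsto_natCast_atTop_atTop)
  have hKd : Tendsto (fun d : ℕ ↦ (√(-K d * d))⁻¹) atTop (nhds 0) :=
    tendsto_inv_atTop_zero.comp (tendsto_sqrt_atTop.comp h)
  have hbound : Tendsto (fun d : ℕ ↦ omegaS (γ + 1) / omegaS (γ + 2) * √(4 * π) *
      ((√(d : ℝ))⁻¹ + (√(-K d * d))⁻¹ * u⁻¹)) atTop (nhds 0) := by
    simpa only [zero_mul, add_zero, mul_zero] using
      (hd.add (hKd.mul_const u⁻¹)).const_mul (omegaS (γ + 1) / omegaS (γ + 2) * √(4 * π))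
  refine tendsto_of_tendsto_of_tendsto_of_le_of_le' tendsto_const_nhds hbound ?_ ?_ <;>
    filter_upwards [eventually_ge_atTop (2 * q)] with d hqd
  · exact Pprob_nonneg hγq (by lia) (hK d (by lia)) hu
  · exact Pprob_le_mul_inv_sqrt_add_inv_sqrt hγq hqd (hK d (by lia)) hu
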